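/- arXiv:1511.05673 — 15 statements merged into one kernel-verified Lean document; each statement's English description precedes it below -/
import Mathlib

section
/- Let n ≥ 2, let G ⊊ ℝⁿ be a nonempty domain, let z, y ∈ G be such that the closed segment [z,y] is contained in G, and let x ∈ [z,y]. Then s_G(z,x) ≤ s_G(z,y). -/
open Set

/-- The triangular ratio metric `s_G(x,y) = sup_{z ∈ ∂G} |x-y|/(|x-z|+|z-y|)`. -/
noncomputable def triangularRatio {n : ℕ} (G : Set (EuclideanSpace ℝ (Fin n)))
    (x y : EuclideanSpace ℝ (Fin n)) : ℝ :=
  sSup ((fun z => dist x y / (dist x z + dist z y)) '' frontier G)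

theorem stmt_1 (n : ℕ) (hn : 2 ≤ n) (G : Set (EuclideanSpace ℝ (Fin n)))
    (hGopen : IsOpen G) (hGconn : IsConnected G) (hGne : G ≠ Set.univ)
    (z y : EuclideanSpace ℝ (Fin n)) (hz : z ∈ G) (hy : y ∈ G)
    (hseg : segment ℝ z y ⊆ G)
    (x : EuclideanSpace ℝ (Fin n)) (hx : x ∈ segment ℝ z y) :
    triangularRatio G z x ≤ triangularRatio G z y := by
  unfold triangularRatio
  have hne : ∀ w ∈ frontier G, 0 < dist z w := by
    intro w hw
    rw [dist_pos]
    rintro rfl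
    rw [hGopen.frontier_eq] at hw
    exact hw.2 hz
  have hadd : dist z x + dist x y = dist z y := dist_add_dist_of_mem_segment hx
  apply Real.sSup_le
  · rintro _ ⟨w, hw, rfl⟩
    have hbdd : BddAbove ((fun w => dist z y / (dist z w + dist w y)) '' frontier G) := by
      refine ⟨1, ?_⟩
      rintro _ ⟨v, hv, rfl⟩
      exact div_le_one_of_le₀ (dist_triangle _ _ _) (by positivity)
    refine le_trans ?_ (le_csSup hbdd ⟨w, hw, rfl⟩)
    have h0 := hne w hw
    have h1 : 0 ≤ dist w x := dist_nonneg
    have h2 : 0 ≤ dist w y := dist_nonneg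
    have h3 := dist_triangle w x y
    have h4 := dist_triangle z w x
    have h5 : 0 ≤ dist z x := dist_nonneg
    have h6 : 0 ≤ dist x y := dist_nonneg
    simp only
    rw [div_le_div_iff₀ (by linarith) (by linarith), ← hadd]
    nlinarith [mul_le_mul_of_nonneg_left h3 h5, mul_le_mul_of_nonneg_left h4 h6]
  · apply Real.sSup_nonneg
    rintro _ ⟨v, hv, rfl⟩
    positivity
end

section
/- Let n ≥ 2, let G ⊊ ℝⁿ be a nonempty domain, let z ∈ G and r ∈ (0,1]. Then the triangular ratio metric ball B_s(z,r) = {y ∈ G : s_G(z,y) < r} is starlike with respect to z: for every y ∈ G with s_G(z,y) < r and every point w on the closed segment [z,y], one has w ∈ G and s_G(z,w) < r. -/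
open Set

theorem ratio_bdd {n : ℕ} (G : Set (EuclideanSpace ℝ (Fin n)))
    (x y : EuclideanSpace ℝ (Fin n)) :
    BddAbove ((fun z => dist x y / (dist x z + dist z y)) '' frontier G) := by
  refine ⟨1, ?_⟩
  rintro _ ⟨p, _, rfl⟩
  exact div_le_one_of_le₀ (dist_triangle x p y) (by positivity)

theorem ratio_key {n : ℕ} (z y p : EuclideanSpace ℝ (Fin n)) (t : ℝ) (h0 : 0 ≤ t) (h1 : t ≤ 1) :
    t * (dist z p + dist p y) ≤ dist z p + dist p (z + t • (y - z)) := by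
  have e : t • (p - y) = (p - (z + t • (y - z))) + (1 - t) • (z - p) := by module
  have h := norm_add_le (p - (z + t • (y - z))) ((1 - t) • (z - p))
  rw [← e, norm_smul, norm_smul, Real.norm_of_nonneg h0,
    Real.norm_of_nonneg (by linarith : 0 ≤ 1 - t)] at h
  simp only [dist_eq_norm]
  linarith

theorem stmt_2 (n : ℕ) (hn : 2 ≤ n) (G : Set (EuclideanSpace ℝ (Fin n)))
    (hGopen : IsOpen G) (hGconn : IsConnected G) (hGne : G ≠ Set.univ)
    (z : EuclideanSpace ℝ (Fin n)) (hz : z ∈ G) (r : ℝ) (hr : r ∈ Set.Ioc (0:ℝ) 1)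
    (y : EuclideanSpace ℝ (Fin n)) (hy : y ∈ G) (hsy : triangularRatio G z y < r)
    (w : EuclideanSpace ℝ (Fin n)) (hw : w ∈ segment ℝ z y) :
    w ∈ G ∧ triangularRatio G z w < r := by
  have hzp : ∀ p ∈ frontier G, 0 < dist z p := by
    intro p hp
    rw [dist_pos]
    rintro rfl
    rw [hGopen.frontier_eq] at hp
    exact hp.2 hz
  constructor
  · by_cases hzy : z = y
    · subst hzy
      rw [segment_same] at hw
      rw [mem_singleton_iff.1 hw]
      exact hz
    · by_contra hwG
      have hpre : IsPreconnected (segment ℝ z y) := (convex_segment z y).isPreconnected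
      obtain ⟨p, hps, hpf⟩ : (segment ℝ z y ∩ frontier G).Nonempty := by
        by_contra hne
        have hno : ∀ q ∈ segment ℝ z y, q ∉ G → q ∈ (closure G)ᶜ := by
          intro q hq hqG hqc
          refine hne ⟨q, hq, ?_⟩
          rw [hGopen.frontier_eq]
          exact ⟨hqc, hqG⟩
        obtain ⟨q, _, hq1, hq2⟩ := hpre G (closure G)ᶜ hGopen isClosed_closure.isOpen_compl
          (fun q hq => (em (q ∈ G)).imp id (hno q hq))
          ⟨z, left_mem_segment ℝ z y, hz⟩ ⟨w, hw, hno w hw hwG⟩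
        exact hq2 (subset_closure hq1)
      have h1 : dist z y / (dist z p + dist p y) ≤ triangularRatio G z y :=
        le_csSup (ratio_bdd G z y) ⟨p, hpf, rfl⟩
      rw [dist_add_dist_of_mem_segment hps, div_self (dist_ne_zero.2 hzy)] at h1
      linarith [hr.2]
  · refine lt_of_le_of_lt ?_ hsy
    rw [segment_eq_image'] at hw
    obtain ⟨t, ⟨h0, h1⟩, rfl⟩ := hw
    rcases (frontier G).eq_empty_or_nonempty with he | hne
    · simp [triangularRatio, he]
    · refine csSup_le (hne.image _) ?_
      rintro _ ⟨p, hp, rfl⟩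
      refine le_trans ?_ (le_csSup (ratio_bdd G z y) ⟨p, hp, rfl⟩)
      have hd := hzp p hp
      have hk := ratio_key z y p t h0 h1
      have hzw : dist z (z + t • (y - z)) = t * dist z y := by
        rw [dist_self_add_right, norm_smul, Real.norm_of_nonneg h0, dist_comm, dist_eq_norm]
      simp only [hzw]
      rw [div_le_div_iff₀ (by positivity) (by positivity)]
      calc t * dist z y * (dist z p + dist p y) = dist z y * (t * (dist z p + dist p y)) := by ring
        _ ≤ _ := mul_le_mul_of_nonneg_left hk dist_nonneg
end

section
/- Let n ≥ 2, let G ⊊ ℝⁿ be a nonempty domain, let x ∈ G and let r ∈ (0, 1/2]. Then the triangular ratio metric ball B_s(x,r) = {y ∈ G : s_G(x,y) < r} is a convex subset of ℝⁿ. -/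
open Set

section aux
variable {E : Type*} [NormedAddCommGroup E] [InnerProductSpace ℝ E]

/-- The limaçon description of `|v| ≤ r (|z| + |v - z|)`. -/
lemma limacon_iff (v z : E) (r : ℝ) (hr0 : 0 < r) (hr1 : r ≤ 1/2) :
    ‖v‖ ≤ r * (‖z‖ + ‖v - z‖) ↔
      (1 - r^2) * ‖v‖^2 ≤ 2 * r * (‖z‖ * ‖v‖ - r * inner ℝ v z) := by
  have h1 : ‖v - z‖^2 = ‖v‖^2 - 2 * inner ℝ v z + ‖z‖^2 := norm_sub_sq_real v z
  have hc : inner ℝ v z ≤ ‖v‖ * ‖z‖ := real_inner_le_norm v z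
  have hv := norm_nonneg v
  have hz := norm_nonneg z
  have hvz := norm_nonneg (v - z)
  have hmul : (r * ‖v - z‖)^2 = r^2 * (‖v‖^2 - 2 * inner ℝ v z + ‖z‖^2) := by
    rw [mul_pow, h1]
  constructor
  · intro h
    by_cases hs : r * ‖z‖ ≤ ‖v‖
    · have : (‖v‖ - r * ‖z‖)^2 ≤ (r * ‖v - z‖)^2 :=
        pow_le_pow_left₀ (by linarith) (by linarith) 2
      rw [hmul] at this
      nlinarith
    · push Not at hs
      have e1 : r^2 * inner ℝ v z ≤ r^2 * (‖v‖ * ‖z‖) :=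
        mul_le_mul_of_nonneg_left hc (sq_nonneg r)
      have e2 : (1 - r^2) * ‖v‖ * ‖v‖ ≤ (1 - r^2) * ‖v‖ * (r * ‖z‖) :=
        mul_le_mul_of_nonneg_left hs.le (mul_nonneg (by nlinarith) hv)
      have e3 : 0 ≤ (1 - r)^2 * (r * (‖v‖ * ‖z‖)) := by positivity
      nlinarith
  · intro h
    by_cases hs : r * ‖z‖ ≤ ‖v‖
    · have : (‖v‖ - r * ‖z‖)^2 ≤ (r * ‖v - z‖)^2 := by
        rw [hmul]; nlinarith
      have := abs_le_of_sq_le_sq' this (by positivity)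
      linarith [this.2]
    · push Not at hs
      have : 0 ≤ r * ‖v - z‖ := by positivity
      linarith

lemma limacon_support (v y z : E) (r k : ℝ) (hr0 : 0 < r) (hr1 : r ≤ 1/2) (hz : z ≠ 0)
    (hk : 0 < k)
    (h : k * ‖v‖^2 ≤ ‖z‖ * ‖v‖ - r * inner ℝ v z) :
    k * (inner ℝ v y * (‖z‖ * ‖y‖ - 2 * r * inner ℝ y z) + r * ‖y‖^2 * inner ℝ v z)
      ≤ (‖z‖ * ‖y‖ - r * inner ℝ y z)^2 := by
  by_cases hv : v = 0
  · subst hv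
    simp
    positivity
  have hV : 0 < ‖v‖ := norm_pos_iff.mpr hv
  have hL : 0 < ‖z‖ * ‖v‖ - r * inner ℝ v z := lt_of_lt_of_le (by positivity) h
  have hc : inner ℝ v y ≤ ‖v‖ * ‖y‖ := real_inner_le_norm v y
  have hyz : inner ℝ y z ≤ ‖y‖ * ‖z‖ := real_inner_le_norm y z
  have hnn : 0 ≤ ‖y‖ * ‖z‖ := by positivity
  have hM : 0 ≤ ‖z‖ * ‖y‖ - 2 * r * inner ℝ y z := by nlinarith
  generalize inner ℝ v y = S at *
  generalize inner ℝ y z = P at *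
  generalize inner ℝ v z = Q at *
  generalize ‖z‖ = d at *
  generalize ‖y‖ = Y at *
  generalize ‖v‖ = V at *
  have e1 : S * (d * Y - 2 * r * P) ≤ V * Y * (d * Y - 2 * r * P) :=
    mul_le_mul_of_nonneg_right hc hM
  have e2 : (d * V - r * Q) * (S * (d * Y - 2 * r * P) + r * Y^2 * Q)
      ≤ V^2 * (d * Y - r * P)^2 := by
    have := mul_le_mul_of_nonneg_left e1 hL.le
    nlinarith [sq_nonneg (r * (V * P - Y * Q))]
  have e3 := mul_le_mul_of_nonneg_left e2 hk.le
  have e4 := mul_le_mul_of_nonneg_right h (sq_nonneg (d * Y - r * P))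
  refine le_of_mul_le_mul_left ?_ hL
  linarith

lemma limacon_convex (a b z : E) (r α β : ℝ) (hr0 : 0 < r) (hr1 : r ≤ 1/2) (hz : z ≠ 0)
    (hα : 0 ≤ α) (hβ : 0 ≤ β) (hab : α + β = 1)
    (ha : ‖a‖ ≤ r * (‖z‖ + ‖a - z‖)) (hb : ‖b‖ ≤ r * (‖z‖ + ‖b - z‖)) :
    ‖α • a + β • b‖ ≤ r * (‖z‖ + ‖(α • a + β • b) - z‖) := by
  by_cases hy : α • a + β • b = 0
  · rw [hy, norm_zero]; positivity
  rw [limacon_iff _ _ r hr0 hr1] at ha hb ⊢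
  set k : ℝ := (1 - r^2) / (2 * r) with hkdef
  have hk : 0 < k := div_pos (by nlinarith) (by positivity)
  have hkr : 1 - r^2 = 2 * r * k := by rw [hkdef]; field_simp
  have h2r : 0 < 2 * r := by positivity
  rw [hkr, mul_assoc] at ha hb ⊢
  have ha' := limacon_support a (α • a + β • b) z r k hr0 hr1 hz hk (le_of_mul_le_mul_left ha h2r)
  have hb' := limacon_support b (α • a + β • b) z r k hr0 hr1 hz hk (le_of_mul_le_mul_left hb h2r)
  refine mul_le_mul_of_nonneg_left ?_ h2r.le
  have i1 : inner ℝ (α • a + β • b) z = α * inner ℝ a z + β * inner ℝ b z := by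
    simp [inner_add_left, real_inner_smul_left]
  have i2 : ‖α • a + β • b‖^2
      = α * inner ℝ a (α • a + β • b) + β * inner ℝ b (α • a + β • b) := by
    rw [← real_inner_self_eq_norm_sq]
    conv_lhs => rw [inner_add_left, real_inner_smul_left, real_inner_smul_left]
  have hyz : inner ℝ (α • a + β • b) z ≤ ‖α • a + β • b‖ * ‖z‖ := real_inner_le_norm _ z
  have hY : 0 < ‖α • a + β • b‖ := norm_pos_iff.mpr hy
  have hZ : 0 < ‖z‖ := norm_pos_iff.mpr hz
  generalize α • a + β • b = y at *
  have hL : 0 < ‖z‖ * ‖y‖ - r * inner ℝ y z := by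
    have : 0 < ‖y‖ * ‖z‖ := by positivity
    nlinarith
  have e1 := mul_le_mul_of_nonneg_left ha' hα
  have e2 := mul_le_mul_of_nonneg_left hb' hβ
  refine le_of_mul_le_mul_left ?_ hL
  have e3 : α * (‖z‖ * ‖y‖ - r * inner ℝ y z)^2 + β * (‖z‖ * ‖y‖ - r * inner ℝ y z)^2
      = (‖z‖ * ‖y‖ - r * inner ℝ y z)^2 := by rw [← add_mul, hab, one_mul]
  have e4 : (‖z‖ * ‖y‖ - r * inner ℝ y z) * (k * ‖y‖^2)
      = k * (‖y‖^2 * (‖z‖ * ‖y‖ - 2 * r * inner ℝ y z) + r * ‖y‖^2 * inner ℝ y z) := by ring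
  have e5 : k * (‖y‖^2 * (‖z‖ * ‖y‖ - 2 * r * inner ℝ y z) + r * ‖y‖^2 * inner ℝ y z)
      = α * (k * (inner ℝ a y * (‖z‖ * ‖y‖ - 2 * r * inner ℝ y z) + r * ‖y‖^2 * inner ℝ a z))
      + β * (k * (inner ℝ b y * (‖z‖ * ‖y‖ - 2 * r * inner ℝ y z) + r * ‖y‖^2 * inner ℝ b z)) := by
    have : k * (‖y‖^2 * (‖z‖ * ‖y‖ - 2 * r * inner ℝ y z) + r * ‖y‖^2 * inner ℝ y z)
      = k * ((α * inner ℝ a y + β * inner ℝ b y) * (‖z‖ * ‖y‖ - 2 * r * inner ℝ y z)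
        + r * ‖y‖^2 * (α * inner ℝ a z + β * inner ℝ b z)) := by
      rw [← i1, ← i2]
    rw [this]; ring
  rw [e4, e5]
  nlinarith

end aux

theorem stmt_3 (n : ℕ) (hn : 2 ≤ n) (G : Set (EuclideanSpace ℝ (Fin n)))
    (hGopen : IsOpen G) (hGconn : IsConnected G) (hGne : G ≠ Set.univ)
    (x : EuclideanSpace ℝ (Fin n)) (hx : x ∈ G) (r : ℝ)
    (hr : r ∈ Set.Ioc (0:ℝ) (1/2)) :
    Convex ℝ {y | y ∈ G ∧ triangularRatio G x y < r} := by
  obtain ⟨hr0, hr1⟩ := hr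
  have hfr : ∀ z ∈ frontier G, z ≠ x := by
    rintro z hz rfl
    rw [hGopen.frontier_eq] at hz
    exact hz.2 hx
  have hpos : ∀ z ∈ frontier G, ∀ y, 0 < dist x z + dist z y := fun z hz y =>
    add_pos_of_pos_of_nonneg (dist_pos.mpr (hfr z hz).symm) dist_nonneg
  have hle : ∀ y, ∀ z ∈ frontier G,
      dist x y / (dist x z + dist z y) ≤ triangularRatio G x y := by
    intro y z hz
    refine le_csSup ⟨1, ?_⟩ ⟨z, hz, rfl⟩
    rintro _ ⟨w, hw, rfl⟩
    exact div_le_one_of_le₀ (dist_triangle _ _ _) (hpos w hw y).le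
  rintro a ⟨haG, ha⟩ b ⟨hbG, hb⟩ α β hα hβ hab
  set t := max (r / 2) (max (triangularRatio G x a) (triangularRatio G x b)) with ht
  have ht0 : 0 < t := lt_of_lt_of_le (by positivity) (le_max_left _ _)
  have htr : t < r := max_lt (by linarith) (max_lt ha hb)
  have key : ∀ z ∈ frontier G, dist x (α • a + β • b)
      ≤ t * (dist x z + dist z (α • a + β • b)) := by
    intro z hz
    have conv : ∀ y, dist x y ≤ t * (dist x z + dist z y) ↔
        ‖y - x‖ ≤ t * (‖z - x‖ + ‖(y - x) - (z - x)‖) := by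
      intro y
      rw [sub_sub_sub_cancel_right, dist_comm x y, dist_comm x z, dist_comm z y,
        dist_eq_norm, dist_eq_norm, dist_eq_norm]
    have hA : dist x a ≤ t * (dist x z + dist z a) := by
      rw [← div_le_iff₀ (hpos z hz a)]
      exact (hle a z hz).trans ((le_max_left _ _).trans (le_max_right _ _))
    have hB : dist x b ≤ t * (dist x z + dist z b) := by
      rw [← div_le_iff₀ (hpos z hz b)]
      exact (hle b z hz).trans ((le_max_right _ _).trans (le_max_right _ _))
    rw [conv] at hA hB ⊢
    have := limacon_convex (a - x) (b - x) (z - x) t α β ht0 (by linarith)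
      (sub_ne_zero.mpr (hfr z hz)) hα hβ hab hA hB
    have e : α • (a - x) + β • (b - x) = (α • a + β • b) - x := by
      have : x = (α + β) • x := by rw [hab, one_smul]
      conv_rhs => rw [this]
      module
    rwa [e] at this
  generalize α • a + β • b = y at key
  refine ⟨?_, ?_⟩
  · by_contra hy
    have hseg : IsPreconnected (segment ℝ x y) := (convex_segment x y).isPreconnected
    have : (segment ℝ x y ∩ frontier G).Nonempty := by
      by_contra hne
      have hsub : segment ℝ x y ⊆ G := by
        refine hseg.subset_of_closure_inter_subset hGopen ⟨x, left_mem_segment ℝ x y, hx⟩ ?_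
        rintro w ⟨hw1, hw2⟩
        by_contra hwG
        exact hne ⟨w, hw2, by rw [hGopen.frontier_eq]; exact ⟨hw1, hwG⟩⟩
      exact hy (hsub (right_mem_segment ℝ x y))
    obtain ⟨z, hz1, hz2⟩ := this
    have h1 := key z hz2
    rw [dist_add_dist_of_mem_segment hz1] at h1
    have h2 : 0 < dist x y := dist_pos.mpr (by rintro rfl; exact hy hx)
    nlinarith
  · refine lt_of_le_of_lt (Real.sSup_le ?_ ht0.le) htr
    rintro _ ⟨z, hz, rfl⟩
    exact (div_le_iff₀ (hpos z hz y)).mpr (key z hz)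
end

section
/- Let n ≥ 2, let G = ℝⁿ \ {0}, let x ∈ G and r ∈ (0,1). Then the ball B_s(x,r) = {y ∈ ℝⁿ \ {0} : |x−y|/(|x|+|y|) < r} is a convex subset of ℝⁿ if and only if r ≤ 1/2. -/
theorem ball_iff_aux {E : Type*} [NormedAddCommGroup E] [InnerProductSpace ℝ E] (x y : E)
    (hx : x ≠ 0) (r : ℝ) (hr : 0 < r) :
    dist x y / (‖x‖ + ‖y‖) < r ↔
      (1 - r^2) * (‖y‖^2 + ‖x‖^2) - 2 * r^2 * ‖x‖ * ‖y‖ < 2 * inner ℝ x y := by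
  have hm : 0 < ‖x‖ := norm_pos_iff.mpr hx
  have ht : 0 ≤ ‖y‖ := norm_nonneg y
  rw [div_lt_iff₀ (by positivity), dist_eq_norm,
    ← sq_lt_sq₀ (norm_nonneg _) (by positivity), norm_sub_sq_real]
  constructor <;> intro h <;> nlinarith

theorem exists_orth_aux (n : ℕ) (hn : 2 ≤ n) (x : EuclideanSpace ℝ (Fin n)) (hx : x ≠ 0) :
    ∃ e : EuclideanSpace ℝ (Fin n), ‖e‖ = 1 ∧ inner ℝ x e = 0 := by
  have h : ∃ v : EuclideanSpace ℝ (Fin n), v ≠ 0 ∧ inner ℝ x v = 0 := by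
    by_contra! hc
    have h1 : (Submodule.span ℝ {x})ᗮ = ⊥ := by
      rw [Submodule.eq_bot_iff]
      intro v hv
      by_contra hv0
      exact hc v hv0 (Submodule.mem_orthogonal_singleton_iff_inner_right.mp hv)
    rw [Submodule.orthogonal_eq_bot_iff] at h1
    have h2 := finrank_span_singleton (K := ℝ) hx
    rw [h1, finrank_top, finrank_euclideanSpace_fin] at h2
    omega
  obtain ⟨v, hv, hxv⟩ := h
  refine ⟨(‖v‖⁻¹ : ℝ) • v, ?_, ?_⟩
  · rw [norm_smul, norm_inv, norm_norm, inv_mul_cancel₀ (norm_ne_zero_iff.mpr hv)]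
  · rw [inner_smul_right, hxv, mul_zero]

theorem stmt_4 (n : ℕ) (hn : 2 ≤ n) (x : EuclideanSpace ℝ (Fin n)) (hx : x ≠ 0)
    (r : ℝ) (hr : r ∈ Set.Ioo (0:ℝ) 1) :
    Convex ℝ {y : EuclideanSpace ℝ (Fin n) | y ≠ 0 ∧ dist x y / (‖x‖ + ‖y‖) < r}
      ↔ r ≤ 1/2 := by
  obtain ⟨hr0, hr1⟩ := hr
  have hm : 0 < ‖x‖ := norm_pos_iff.mpr hx
  have hK : 0 < 1 - r^2 := by nlinarith
  simp only [ball_iff_aux x _ hx r hr0]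
  constructor
  · intro hconv
    by_contra! hlt
    obtain ⟨e, he, hxe⟩ := exists_orth_aux n hn x hx
    set m := ‖x‖ with hmdef
    obtain ⟨c, hc⟩ : ∃ c : ℝ, c = (1 - r) / (1 + r) := ⟨_, rfl⟩
    obtain ⟨t, htd⟩ : ∃ t : ℝ, t = r^2 / (1 - r^2) := ⟨_, rfl⟩
    have hc' : c * (1 + r) = 1 - r := by rw [hc]; field_simp
    have ht' : t * (1 - r^2) = r^2 := by rw [htd]; field_simp
    have hc0 : 0 < c := by rw [hc]; apply div_pos <;> linarith
    have hct : c < t := by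
      have : c * (1 - r^2) < t * (1 - r^2) := by
        have : c * (1 - r^2) = (1 - r)^2 := by linear_combination (1 - r) * hc'
        rw [ht', this]; nlinarith
      exact lt_of_mul_lt_mul_right this hK.le
    have hD : 0 ≤ t^2 - c^2 := by nlinarith
    have hmem : ∀ d : ℝ, d^2 = t^2 - c^2 → c • x + (d * m) • e ∈
        {y : EuclideanSpace ℝ (Fin n) | y ≠ 0 ∧
          (1 - r^2) * (‖y‖^2 + m^2) - 2 * r^2 * m * ‖y‖ < 2 * inner ℝ x y} := by
      intro d hd
      have hin : inner ℝ x (c • x + (d * m) • e) = c * m^2 := by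
        rw [inner_add_right, inner_smul_right, inner_smul_right, hxe,
          real_inner_self_eq_norm_sq]; ring
      have hnorm : ‖c • x + (d * m) • e‖ = t * m := by
        rw [← sq_eq_sq₀ (norm_nonneg _) (by nlinarith), norm_add_sq_real, inner_smul_left,
          inner_smul_right, hxe, norm_smul, norm_smul, he, mul_pow, mul_pow]
        simp only [Real.norm_eq_abs, sq_abs, ← hmdef]
        linear_combination m^2 * hd
      refine ⟨?_, ?_⟩
      · rw [← norm_pos_iff, hnorm]; exact mul_pos (hc0.trans hct) hm
      · rw [hin, hnorm]
        have key : (1 - r^2) * (t^2 + 1) - 2 * r^2 * t < 2 * c := by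
          have h1 : (1 - r^2) * (c^2 + 1) - 2 * r^2 * c = 2 * c := by
            linear_combination (c * (1 - r) - (1 + r)) * hc'
          have h2 : 0 < (1 - r^2) * (t - c)^2 := mul_pos hK (by nlinarith)
          linear_combination h2 + h1 + 2 * (t - c) * ht'
        nlinarith [mul_lt_mul_of_pos_right key (pow_pos hm 2)]
    have hs := Real.sq_sqrt hD
    have h1 := hmem _ hs
    have h2 := hmem (-Real.sqrt (t^2 - c^2)) (by rw [neg_sq, hs])
    have h3 := hconv h1 h2 (a := 1/2) (b := 1/2) (by norm_num) (by norm_num) (by norm_num)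
    have h4 : (1/2 : ℝ) • (c • x + (Real.sqrt (t^2 - c^2) * m) • e) +
        (1/2 : ℝ) • (c • x + (-Real.sqrt (t^2 - c^2) * m) • e) = c • x := by module
    rw [h4] at h3
    have h5 := h3.2
    rw [inner_smul_right, real_inner_self_eq_norm_sq, norm_smul, Real.norm_of_nonneg hc0.le,
      ← hmdef] at h5
    have h1 : (1 - r^2) * (c^2 + 1) - 2 * r^2 * c = 2 * c := by
      linear_combination (c * (1 - r) - (1 + r)) * hc'
    have : (1 - r^2) * ((c * m)^2 + m^2) - 2 * r^2 * m * (c * m) = 2 * (c * m^2) := by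
      linear_combination m^2 * h1
    linarith
  · intro hle
    have hlow : ∀ y : EuclideanSpace ℝ (Fin n),
        (1 - r^2) * (‖y‖^2 + ‖x‖^2) - 2 * r^2 * ‖x‖ * ‖y‖ < 2 * inner ℝ x y →
        r^2 * ‖x‖^2 < (1 - r^2) * inner ℝ x y := by
      intro y h
      have h1 := mul_lt_mul_of_pos_left h hK
      have h2 : 0 ≤ (1 - 4 * r^2) * ‖x‖^2 := mul_nonneg (by nlinarith) (by positivity)
      nlinarith [sq_nonneg ((1 - r^2) * ‖y‖ - r^2 * ‖x‖)]
    rintro y ⟨-, hy⟩ z ⟨-, hz⟩ a b ha hb hab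
    have hu : inner ℝ x (a • y + b • z) = a * inner ℝ x y + b * inner ℝ x z := by
      rw [inner_add_right, inner_smul_right, inner_smul_right]
    have hs : ‖a • y + b • z‖ ≤ a * ‖y‖ + b * ‖z‖ := by
      refine (norm_add_le _ _).trans ?_
      rw [norm_smul, norm_smul, Real.norm_of_nonneg ha, Real.norm_of_nonneg hb]
    have hcs := real_inner_le_norm x (a • y + b • z)
    have hly := hlow y hy
    have hlz := hlow z hz
    obtain rfl : b = 1 - a := by linarith
    have hcomb : ∀ p q P Q : ℝ, p < P → q < Q → a * p + (1 - a) * q < a * P + (1 - a) * Q := by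
      intro p q P Q h1 h2
      rcases ha.eq_or_lt with h | h
      · subst h; linarith
      · have := mul_lt_mul_of_pos_left h1 h
        have := mul_le_mul_of_nonneg_left h2.le hb
        linarith
    have hl := hcomb _ _ _ _ hly hlz
    have hq := hcomb _ _ _ _ hy hz
    rw [hu] at hcs
    have ht : r^2 * ‖x‖ < (1 - r^2) * ‖a • y + (1 - a) • z‖ := by
      have := mul_le_mul_of_nonneg_left hcs hK.le
      refine lt_of_mul_lt_mul_left (a := ‖x‖) ?_ hm.le
      nlinarith
    refine ⟨?_, ?_⟩
    · intro h0
      rw [h0, norm_zero] at ht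
      have : 0 < r^2 * ‖x‖ := by positivity
      linarith
    · rw [hu]
      generalize ‖a • y + (1 - a) • z‖ = t at *
      generalize ‖y‖ = t1 at *
      generalize ‖z‖ = t2 at *
      have hmono : 0 ≤ ((a * t1 + (1 - a) * t2) - t) *
          ((1 - r^2) * (a * t1 + (1 - a) * t2 + t) - 2 * (r^2 * ‖x‖)) := by
        apply mul_nonneg (by linarith)
        have := mul_le_mul_of_nonneg_left hs hK.le
        linarith
      have hsq : 0 ≤ (1 - r^2) * (a * (1 - a) * (t1 - t2)^2) := by positivity
      linear_combination hq + hmono + hsq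
end

section
/- Let n ≥ 2, x ∈ ℝⁿ \ {0} and r ∈ (0,π]. If y ∈ ℝⁿ \ {0} satisfies |x−y|/(|x|+|y|) < sin(r/2), then ∠(x,0,y) < r. That is, B_s(x, sin(r/2)) ⊂ B_v(x,r) in ℝⁿ \ {0}. -/
theorem stmt_7 (n : ℕ) (hn : 2 ≤ n) (x : EuclideanSpace ℝ (Fin n)) (hx : x ≠ 0)
    (r : ℝ) (hr : r ∈ Set.Ioc (0:ℝ) Real.pi)
    (y : EuclideanSpace ℝ (Fin n)) (hy : y ≠ 0)
    (hs : dist x y / (‖x‖ + ‖y‖) < Real.sin (r / 2)) :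
    EuclideanGeometry.angle x 0 y < r := by
  have ha : 0 < ‖x‖ := norm_pos_iff.mpr hx
  have hb : 0 < ‖y‖ := norm_pos_iff.mpr hy
  rw [div_lt_iff₀ (by positivity), dist_eq_norm] at hs
  by_contra! h
  have hA : EuclideanGeometry.angle x 0 y = InnerProductGeometry.angle x y := by
    simp [EuclideanGeometry.angle]
  rw [hA] at h
  have hc : Real.cos (InnerProductGeometry.angle x y) ≤ Real.cos r :=
    Real.cos_le_cos_of_nonneg_of_le_pi hr.1.le (InnerProductGeometry.angle_le_pi x y) h
  have hr2 : Real.cos r = 1 - 2 * Real.sin (r / 2) ^ 2 := by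
    have h1 := Real.cos_two_mul (r / 2)
    have h2 := Real.sin_sq_add_cos_sq (r / 2)
    rw [mul_div_cancel₀ r two_ne_zero] at h1
    linarith
  have hi := InnerProductGeometry.cos_angle_mul_norm_mul_norm x y
  have hd := norm_sub_sq_real x y
  have hsq : ‖x - y‖ ^ 2 < (Real.sin (r / 2) * (‖x‖ + ‖y‖)) ^ 2 :=
    pow_lt_pow_left₀ hs (norm_nonneg _) two_ne_zero
  have h3 := mul_le_mul_of_nonneg_right hc (mul_pos ha hb).le
  rw [hi, hr2] at h3
  have h4 := mul_nonneg (sq_nonneg (‖x‖ - ‖y‖)) (sub_nonneg.mpr (Real.sin_sq_le_one (r / 2)))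
  nlinarith
end

section
/- Let n ≥ 2, x ∈ ℝⁿ \ {0} and r ∈ (0,π]. For every y ∈ ℝⁿ \ {0} with ∠(x,0,y) = r one has |x−y|/(|x|+|y|) ≥ sin(r/2), and equality holds when |y| = |x|. Hence the radius sin(r/2) in the inclusion B_s(x, sin(r/2)) ⊂ B_v(x,r) is best possible. -/
theorem stmt_8 (n : ℕ) (hn : 2 ≤ n) (x : EuclideanSpace ℝ (Fin n)) (hx : x ≠ 0)
    (r : ℝ) (hr : r ∈ Set.Ioc (0:ℝ) Real.pi)
    (y : EuclideanSpace ℝ (Fin n)) (hy : y ≠ 0)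
    (hangle : EuclideanGeometry.angle x 0 y = r) :
    Real.sin (r / 2) ≤ dist x y / (‖x‖ + ‖y‖) ∧
      (‖y‖ = ‖x‖ → dist x y / (‖x‖ + ‖y‖) = Real.sin (r / 2)) := by
  have hs : 0 ≤ Real.sin (r / 2) :=
    Real.sin_nonneg_of_nonneg_of_le_pi (by linarith [hr.1]) (by linarith [hr.1, hr.2])
  have hs1 : Real.sin (r / 2) ^ 2 ≤ 1 := Real.sin_sq_le_one _
  have hcos : Real.cos r = 1 - 2 * Real.sin (r / 2) ^ 2 := by
    have h := Real.cos_two_mul (r / 2)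
    have h2 := Real.sin_sq_add_cos_sq (r / 2)
    rw [show 2 * (r / 2) = r by ring] at h
    linarith
  have ha : 0 < ‖x‖ := norm_pos_iff.mpr hx
  have hb : 0 < ‖y‖ := norm_pos_iff.mpr hy
  have hlaw := EuclideanGeometry.law_cos x 0 y
  rw [hangle, hcos, dist_zero_right, dist_zero_right] at hlaw
  have hd : 0 ≤ dist x y := dist_nonneg
  generalize dist x y = d at *
  generalize Real.sin (r / 2) = s at *
  generalize ‖x‖ = a at *
  generalize ‖y‖ = b at *
  constructor
  · rw [le_div_iff₀ (by positivity)]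
    refine (le_abs_self _).trans (abs_le_of_sq_le_sq ?_ hd)
    nlinarith [mul_nonneg (sub_nonneg.mpr hs1) (sq_nonneg (a - b))]
  · intro h
    subst h
    rw [div_eq_iff (by positivity)]
    rw [← sq_eq_sq₀ hd (by positivity)]
    linarith
end

section
/- Let n ≥ 2, x ∈ ℝⁿ \ {0} and r ∈ (0,π]. If y ∈ ℝⁿ \ {0} satisfies log(1 + |x−y|/min(|x|,|y|)) < log(1 + 2 sin(r/2)), then ∠(x,0,y) < r. That is, B_j(x, log(1+2 sin(r/2))) ⊂ B_v(x,r) in ℝⁿ \ {0}. -/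
theorem stmt_9 (n : ℕ) (hn : 2 ≤ n) (x : EuclideanSpace ℝ (Fin n)) (hx : x ≠ 0)
    (r : ℝ) (hr : r ∈ Set.Ioc (0:ℝ) Real.pi)
    (y : EuclideanSpace ℝ (Fin n)) (hy : y ≠ 0)
    (hj : Real.log (1 + dist x y / min ‖x‖ ‖y‖) < Real.log (1 + 2 * Real.sin (r / 2))) :
    EuclideanGeometry.angle x 0 y < r := by
  obtain ⟨hr0, hrpi⟩ := hr
  have ha : 0 < ‖x‖ := norm_pos_iff.mpr hx
  have hb : 0 < ‖y‖ := norm_pos_iff.mpr hy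
  have hm : 0 < min ‖x‖ ‖y‖ := lt_min ha hb
  have hs : 0 < Real.sin (r / 2) := Real.sin_pos_of_pos_of_lt_pi (by linarith) (by linarith)
  have hq : 0 ≤ dist x y / min ‖x‖ ‖y‖ := div_nonneg dist_nonneg hm.le
  have h1 := (Real.log_lt_log_iff (by linarith) (by linarith)).mp hj
  have h2 : dist x y < 2 * Real.sin (r / 2) * min ‖x‖ ‖y‖ := by
    rw [← div_lt_iff₀ hm]; linarith
  by_contra! hcon
  have hang : EuclideanGeometry.angle x 0 y = InnerProductGeometry.angle x y := by
    simp [EuclideanGeometry.angle]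
  rw [hang] at hcon
  have hcos : Real.cos (InnerProductGeometry.angle x y) ≤ Real.cos r :=
    Real.cos_le_cos_of_nonneg_of_le_pi hr0.le (InnerProductGeometry.angle_le_pi x y) hcon
  have hcr : Real.cos r = 1 - 2 * Real.sin (r / 2) ^ 2 := by
    have h := Real.cos_sq_add_sin_sq (r / 2)
    have h' := Real.cos_two_mul (r / 2)
    rw [show 2 * (r / 2) = r by ring] at h'
    linarith
  have hlaw := InnerProductGeometry.norm_sub_sq_eq_norm_sq_add_norm_sq_sub_two_mul_norm_mul_norm_mul_cos_angle x y
  rw [← dist_eq_norm] at hlaw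
  have hsq : dist x y ^ 2 < (2 * Real.sin (r / 2) * min ‖x‖ ‖y‖) ^ 2 :=
    pow_lt_pow_left₀ h2 dist_nonneg two_ne_zero
  have hmm : min ‖x‖ ‖y‖ ^ 2 ≤ ‖x‖ * ‖y‖ := by
    rw [sq]
    exact mul_le_mul (min_le_left _ _) (min_le_right _ _) hm.le ha.le
  have h3 := mul_le_mul_of_nonneg_left hmm (sq_nonneg (Real.sin (r / 2)))
  have h4 := mul_le_mul_of_nonneg_left (hcos.trans_eq hcr) (mul_pos ha hb).le
  nlinarith [sq_nonneg (‖x‖ - ‖y‖)]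
end

section
/- Let n ≥ 2, x ∈ ℝⁿ \ {0} and r ∈ (0,π]. For every y ∈ ℝⁿ \ {0} with ∠(x,0,y) = r one has log(1 + |x−y|/min(|x|,|y|)) ≥ log(1 + 2 sin(r/2)), with equality when |y| = |x|. Hence the radius log(1 + 2 sin(r/2)) in the inclusion B_j(x, log(1+2 sin(r/2))) ⊂ B_v(x,r) is best possible. -/
theorem stmt_10 (n : ℕ) (hn : 2 ≤ n) (x : EuclideanSpace ℝ (Fin n)) (hx : x ≠ 0)
    (r : ℝ) (hr : r ∈ Set.Ioc (0:ℝ) Real.pi)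
    (y : EuclideanSpace ℝ (Fin n)) (hy : y ≠ 0)
    (hangle : EuclideanGeometry.angle x 0 y = r) :
    Real.log (1 + 2 * Real.sin (r / 2)) ≤ Real.log (1 + dist x y / min ‖x‖ ‖y‖) ∧
      (‖y‖ = ‖x‖ →
        Real.log (1 + dist x y / min ‖x‖ ‖y‖) = Real.log (1 + 2 * Real.sin (r / 2))) := by
  have ha : 0 < ‖x‖ := norm_pos_iff.mpr hx
  have hb : 0 < ‖y‖ := norm_pos_iff.mpr hy
  have hs : 0 ≤ Real.sin (r / 2) :=
    Real.sin_nonneg_of_nonneg_of_le_pi (by linarith [hr.1]) (by linarith [hr.1, hr.2])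
  have hc : Real.cos r = 1 - 2 * Real.sin (r / 2) ^ 2 := by
    have h := Real.cos_two_mul (r / 2)
    have h2 := Real.sin_sq_add_cos_sq (r / 2)
    rw [show 2 * (r / 2) = r by ring] at h
    linarith
  have hlaw := EuclideanGeometry.law_cos x 0 y
  rw [hangle, hc, dist_zero_right, dist_zero_right] at hlaw
  have hd : 0 ≤ dist x y := dist_nonneg
  have hm : 0 < min ‖x‖ ‖y‖ := lt_min ha hb
  have key : dist x y ^ 2 = (‖x‖ - ‖y‖) ^ 2 + 4 * (‖x‖ * ‖y‖) * Real.sin (r / 2) ^ 2 := by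
    linarith
  constructor
  · apply Real.log_le_log (by positivity)
    have : 2 * Real.sin (r / 2) ≤ dist x y / min ‖x‖ ‖y‖ := by
      rw [le_div_iff₀ hm]
      refine (abs_le_of_sq_le_sq' ?_ hd).2
      have h1 : min ‖x‖ ‖y‖ * min ‖x‖ ‖y‖ ≤ ‖x‖ * ‖y‖ :=
        mul_le_mul (min_le_left _ _) (min_le_right _ _) hm.le ha.le
      have h2 := mul_le_mul_of_nonneg_right h1 (sq_nonneg (Real.sin (r / 2)))
      nlinarith [sq_nonneg (‖x‖ - ‖y‖)]
    linarith
  · intro h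
    rw [h, min_self]
    rw [h] at key
    have : dist x y = 2 * Real.sin (r / 2) * ‖x‖ := by
      rw [← sq_eq_sq₀ hd (by positivity)]
      rw [key]; ring
    rw [this, mul_div_assoc, div_self ha.ne', mul_one]
end

section
/- Let n ≥ 2 and x ∈ ℝⁿ \ {0}. (a) If r ∈ (0,π/2] and y ∈ ℝⁿ satisfies |x−y| < |x| sin r, then y ≠ 0 and ∠(x,0,y) < r. (b) If r ∈ (π/2, π] and y ∈ ℝⁿ satisfies |x−y| < |x|, then y ≠ 0 and ∠(x,0,y) < r. That is, the Euclidean ball Bⁿ(x,R) with R = |x| sin r for r ∈ (0,π/2] and R = |x| for r ∈ (π/2,π] is contained in B_v(x,r). -/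
theorem stmt_12 (n : ℕ) (hn : 2 ≤ n) (x : EuclideanSpace ℝ (Fin n)) (hx : x ≠ 0) :
    (∀ r ∈ Set.Ioc (0:ℝ) (Real.pi / 2), ∀ y : EuclideanSpace ℝ (Fin n),
      dist x y < ‖x‖ * Real.sin r → y ≠ 0 ∧ EuclideanGeometry.angle x 0 y < r) ∧
    (∀ r ∈ Set.Ioc (Real.pi / 2) Real.pi, ∀ y : EuclideanSpace ℝ (Fin n),
      dist x y < ‖x‖ → y ≠ 0 ∧ EuclideanGeometry.angle x 0 y < r) := by
  have key : ∀ r ∈ Set.Ioc (0:ℝ) (Real.pi / 2), ∀ y : EuclideanSpace ℝ (Fin n),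
      dist x y < ‖x‖ * Real.sin r → y ≠ 0 ∧ EuclideanGeometry.angle x 0 y < r := by
    intro r hr y hd
    have hxn : 0 ≤ ‖x‖ := norm_nonneg x
    have hyn : 0 ≤ ‖y‖ := norm_nonneg y
    refine ⟨?_, ?_⟩
    · rintro rfl
      rw [dist_zero_right] at hd
      nlinarith [Real.sin_le_one r]
    · by_contra hc
      have hc := not_lt.mp hc
      have ha : EuclideanGeometry.angle x 0 y = InnerProductGeometry.angle x y := by
        simp [EuclideanGeometry.angle]
      rw [ha] at hc
      have hcos := Real.cos_le_cos_of_nonneg_of_le_pi hr.1.le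
        (InnerProductGeometry.angle_le_pi x y) hc
      have hin := InnerProductGeometry.cos_angle_mul_norm_mul_norm x y
      have hsq := norm_sub_sq_real x y
      rw [dist_eq_norm] at hd
      have h1 : ‖x - y‖ ^ 2 < (‖x‖ * Real.sin r) ^ 2 :=
        pow_lt_pow_left₀ hd (norm_nonneg _) two_ne_zero
      have h2 := mul_le_mul_of_nonneg_right hcos (mul_nonneg hxn hyn)
      have h3 : (‖x‖ * Real.sin r) ^ 2 = ‖x‖ ^ 2 - (‖x‖ * Real.cos r) ^ 2 := by
        rw [mul_pow, Real.sin_sq]; ring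
      nlinarith [sq_nonneg (‖y‖ - ‖x‖ * Real.cos r)]
  refine ⟨key, ?_⟩
  intro r hr y hd
  obtain ⟨h1, h2⟩ := key (Real.pi / 2) ⟨by positivity, le_rfl⟩ y (by simpa using hd)
  exact ⟨h1, h2.trans hr.1⟩
end

section
/- Let n ≥ 2, x ∈ ℝⁿ \ {0} and r ∈ (0,π]. If y ∈ ℝⁿ \ {0} satisfies p(x,y) = |x−y| / √(|x−y|² + 4|x||y|) < sin(r/2)/√(sin²(r/2) + 1), then ∠(x,0,y) < r. That is, B_p(x, sin(r/2)/√(sin²(r/2)+1)) ⊂ B_v(x,r) in ℝⁿ \ {0}. -/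
theorem stmt_14 (n : ℕ) (hn : 2 ≤ n) (x : EuclideanSpace ℝ (Fin n)) (hx : x ≠ 0)
    (r : ℝ) (hr : r ∈ Set.Ioc (0:ℝ) Real.pi)
    (y : EuclideanSpace ℝ (Fin n)) (hy : y ≠ 0)
    (hp : dist x y / Real.sqrt (dist x y ^ 2 + 4 * ‖x‖ * ‖y‖) <
      Real.sin (r / 2) / Real.sqrt (Real.sin (r / 2) ^ 2 + 1)) :
    EuclideanGeometry.angle x 0 y < r := by
  by_contra hcon
  have hle : r ≤ EuclideanGeometry.angle x 0 y := not_lt.mp hcon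
  obtain ⟨hr0, hrpi⟩ := hr
  have ha : 0 < ‖x‖ := norm_pos_iff.mpr hx
  have hb : 0 < ‖y‖ := norm_pos_iff.mpr hy
  have hab : 0 < ‖x‖ * ‖y‖ := mul_pos ha hb
  have hlaw := EuclideanGeometry.law_cos x 0 y
  simp only [dist_zero_right] at hlaw
  have hcos : Real.cos (EuclideanGeometry.angle x 0 y) ≤ Real.cos r :=
    Real.cos_le_cos_of_nonneg_of_le_pi hr0.le (EuclideanGeometry.angle_le_pi x 0 y) hle
  have hs : 0 ≤ Real.sin (r / 2) :=
    Real.sin_nonneg_of_nonneg_of_le_pi (by linarith) (by linarith)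
  have hcr : Real.cos r = 1 - 2 * Real.sin (r / 2) ^ 2 := by
    have h1 := Real.cos_two_mul (r / 2)
    have h2 := Real.sin_sq_add_cos_sq (r / 2)
    rw [show 2 * (r / 2) = r by ring] at h1
    linarith
  rw [hcr] at hcos
  have hd : 0 ≤ dist x y := dist_nonneg
  generalize Real.sin (r / 2) = s at *
  generalize dist x y = d at *
  have hmul := mul_le_mul_of_nonneg_left hcos hab.le
  have key : 4 * (‖x‖ * ‖y‖) * s ^ 2 ≤ d ^ 2 := by
    nlinarith [sq_nonneg (‖x‖ - ‖y‖)]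
  have hA : 0 < d ^ 2 + 4 * ‖x‖ * ‖y‖ := by nlinarith [sq_nonneg d]
  have hB : 0 < s ^ 2 + 1 := by positivity
  rw [div_lt_div_iff₀ (Real.sqrt_pos.mpr hA) (Real.sqrt_pos.mpr hB)] at hp
  refine absurd hp (not_lt.mpr ?_)
  refine abs_le_of_sq_le_sq' ?_ (by positivity) |>.2
  rw [mul_pow, mul_pow, Real.sq_sqrt hA.le, Real.sq_sqrt hB.le]
  nlinarith
end

section
/- Let n ≥ 2, x ∈ ℝⁿ \ {0} and r ∈ (0,π]. For every y ∈ ℝⁿ \ {0} with ∠(x,0,y) = r one has p(x,y) = |x−y| / √(|x−y|² + 4|x||y|) ≥ sin(r/2)/√(sin²(r/2)+1), with equality when |y| = |x|. Hence the radius sin(r/2)/√(sin²(r/2)+1) in the inclusion B_p(x, sin(r/2)/√(sin²(r/2)+1)) ⊂ B_v(x,r) is best possible. -/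
theorem stmt_15 (n : ℕ) (hn : 2 ≤ n) (x : EuclideanSpace ℝ (Fin n)) (hx : x ≠ 0)
    (r : ℝ) (hr : r ∈ Set.Ioc (0:ℝ) Real.pi)
    (y : EuclideanSpace ℝ (Fin n)) (hy : y ≠ 0)
    (hangle : EuclideanGeometry.angle x 0 y = r) :
    Real.sin (r / 2) / Real.sqrt (Real.sin (r / 2) ^ 2 + 1) ≤
      dist x y / Real.sqrt (dist x y ^ 2 + 4 * ‖x‖ * ‖y‖) ∧
      (‖y‖ = ‖x‖ →
        dist x y / Real.sqrt (dist x y ^ 2 + 4 * ‖x‖ * ‖y‖) =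
          Real.sin (r / 2) / Real.sqrt (Real.sin (r / 2) ^ 2 + 1)) := by
  obtain ⟨hr0, hr1⟩ := hr
  have ha : 0 < ‖x‖ := norm_pos_iff.mpr hx
  have hb : 0 < ‖y‖ := norm_pos_iff.mpr hy
  have hs : 0 ≤ Real.sin (r / 2) :=
    Real.sin_nonneg_of_nonneg_of_le_pi (by linarith) (by linarith)
  have hlaw := EuclideanGeometry.law_cos x 0 y
  rw [hangle, dist_zero_right, dist_zero_right] at hlaw
  have hcos : Real.cos r = 1 - 2 * Real.sin (r / 2) ^ 2 := by
    have h1 := Real.cos_two_mul (r / 2)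
    have h2 := Real.sin_sq_add_cos_sq (r / 2)
    rw [show 2 * (r / 2) = r by ring] at h1
    linarith
  rw [hcos] at hlaw
  have hd0 : 0 ≤ dist x y := dist_nonneg
  have hab : 0 < ‖x‖ * ‖y‖ := mul_pos ha hb
  generalize dist x y = d at *
  generalize Real.sin (r / 2) = s at *
  generalize ‖x‖ = a at *
  generalize ‖y‖ = b at *
  have hp1 : 0 < s ^ 2 + 1 := by positivity
  have hp2 : 0 < d ^ 2 + 4 * a * b := by positivity
  have hd : d ^ 2 = (a - b) ^ 2 + 4 * a * b * s ^ 2 := by linarith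
  have hq1 := Real.sq_sqrt hp1.le
  have hq2 := Real.sq_sqrt hp2.le
  have hm1 : (s * √(d ^ 2 + 4 * a * b)) ^ 2 = s ^ 2 * (d ^ 2 + 4 * a * b) := by
    rw [mul_pow, hq2]
  have hm2 : (d * √(s ^ 2 + 1)) ^ 2 = d ^ 2 * (s ^ 2 + 1) := by
    rw [mul_pow, hq1]
  constructor
  · rw [div_le_div_iff₀ (Real.sqrt_pos.mpr hp1) (Real.sqrt_pos.mpr hp2)]
    refine (sq_le_sq₀ (by positivity) (by positivity)).mp ?_
    rw [hm1, hm2]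
    nlinarith [sq_nonneg (a - b)]
  · intro h
    subst h
    rw [div_eq_div_iff (Real.sqrt_pos.mpr hp2).ne' (Real.sqrt_pos.mpr hp1).ne']
    refine (sq_eq_sq₀ (by positivity) (by positivity)).mp ?_
    rw [hm1, hm2]
    linarith
end

section
/- Let n ≥ 2, let x ∈ Hⁿ = {w ∈ ℝⁿ : wₙ > 0}, let r ∈ (0,π/2), and let y ∈ Hⁿ satisfy v(x,y) = sup{∠(x,z,y) : z ∈ ℝⁿ, zₙ = 0} < r. Then |y − x − 2xₙ tan²(r)·eₙ| < 2xₙ tan(r)/cos(r), and consequently |y − x| < 2xₙ (tan(r)/cos(r) + tan²(r)). That is, B_v(x,r) ⊂ Bⁿ(x + 2xₙ tan²(r) eₙ, 2xₙ tan(r)/cos(r)) ⊂ Bⁿ(x, 2xₙ(tan(r)/cos(r) + tan²(r))). -/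
/-- The visual angle metric on the upper half space `{w : wᵢ > 0}` (with `i` the index of
the last coordinate): `v(x,y) = sup {∠(x,z,y) : z ∈ ∂Hⁿ} = sup {∠(x,z,y) : zᵢ = 0}`. -/
noncomputable def visualAngleH {n : ℕ} (i : Fin n) (x y : EuclideanSpace ℝ (Fin n)) : ℝ :=
  sSup {θ : ℝ | ∃ z : EuclideanSpace ℝ (Fin n), z i = 0 ∧ θ = EuclideanGeometry.angle x z y}

lemma le_of_sq_le_sq_va {u w : ℝ} (h : u ^ 2 ≤ w ^ 2) (hw : 0 ≤ w) : u ≤ w :=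
  (le_abs_self u).trans (abs_le_of_sq_le_sq h hw)

lemma va_plane (a b d q D : ℝ) (ha : 0 < a) (hb : 0 < b) (hd : 0 ≤ d) (hq : 0 < q)
    (hqq : q ^ 2 = a * b) (hD : 0 < D) (hDD : D ^ 2 = d ^ 2 + (b - a) ^ 2) :
    ∃ s : ℝ, D * (s * (s - d) + a * b) ≤ 2 * q * (a * d - s * (a - b)) := by
  refine ⟨d / 2 - q * (a - b) / D, ?_⟩
  set s := d / 2 - q * (a - b) / D with hs
  have h1 : D * s = D * d / 2 - q * (a - b) := by rw [hs]; field_simp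
  have hdD : d ≤ D := by
    apply le_of_sq_le_sq_va <;> nlinarith [sq_nonneg (b - a)]
  have hqab : q ≤ a + b := by nlinarith
  have h2 : q * d ≤ (a + b) * D := mul_le_mul hqab hdD hd (by linarith)
  have h3 : 0 ≤ q * d * ((a + b) * D - q * d) := by
    apply mul_nonneg (by positivity); linarith
  have key : 4 * D * (D * (s * (s - d) + a * b) - 2 * q * (a * d - s * (a - b)))
      = -(D ^ 2 * d ^ 2 + 4 * (q * d * ((a + b) * D - q * d))) := by
    have : 4 * D * (D * (s * (s - d) + a * b) - 2 * q * (a * d - s * (a - b)))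
      = 4 * (D * s) ^ 2 - 4 * D * d * (D * s) + 4 * D ^ 2 * (a * b)
        - 8 * q * D * a * d + 8 * q * (a - b) * (D * s) := by ring
    rw [this, h1, ← hqq]
    linear_combination 4 * q ^ 2 * hDD
  have : 4 * D * (D * (s * (s - d) + a * b) - 2 * q * (a * d - s * (a - b))) ≤ 0 := by
    rw [key]; nlinarith [sq_nonneg (D * d)]
  by_contra! hc
  have : 0 < 4 * D * (D * (s * (s - d) + a * b) - 2 * q * (a * d - s * (a - b))) := by
    apply mul_pos (by positivity); linarith
  linarith

lemma va_dir {n : ℕ} (i j : Fin n) (hij : j ≠ i) (p : EuclideanSpace ℝ (Fin n)) :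
    ∃ (e : EuclideanSpace ℝ (Fin n)) (d : ℝ), 0 ≤ d ∧ ‖e‖ = 1 ∧ e i = 0 ∧
      p = d • e + (p i) • EuclideanSpace.single i (1:ℝ) := by
  set h := p - (p i) • EuclideanSpace.single i (1:ℝ) with hh
  have hi : h i = 0 := by simp [hh]
  by_cases h0 : h = 0
  · refine ⟨EuclideanSpace.single j 1, 0, le_rfl, by simp, by simp [hij.symm], ?_⟩
    rw [zero_smul, zero_add]; exact sub_eq_zero.mp h0
  · have hn : ‖h‖ ≠ 0 := norm_ne_zero_iff.mpr h0
    refine ⟨‖h‖⁻¹ • h, ‖h‖, norm_nonneg _, ?_, by simp [hi], ?_⟩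
    · rw [norm_smul, norm_inv, norm_norm, inv_mul_cancel₀ hn]
    · rw [smul_smul, mul_inv_cancel₀ hn, one_smul, hh]; abel

lemma va_inner {n : ℕ} (i : Fin n) (e : EuclideanSpace ℝ (Fin n)) (he : ‖e‖ = 1) (hi : e i = 0)
    (a b c d : ℝ) :
    inner ℝ (a • e + b • EuclideanSpace.single i (1:ℝ)) (c • e + d • EuclideanSpace.single i (1:ℝ))
      = a * c + b * d := by
  simp [inner_add_left, inner_add_right, inner_smul_left, inner_smul_right, he, hi,
    EuclideanSpace.inner_single_left, EuclideanSpace.inner_single_right]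
  try ring

lemma va_key {n : ℕ} (i j : Fin n) (hij : j ≠ i) (x y : EuclideanSpace ℝ (Fin n))
    (hx : 0 < x i) (hy : 0 < y i) (r : ℝ) (hr : 0 < r) (hr2 : r < Real.pi / 2)
    (hv : visualAngleH i x y < r) :
    ‖y - x‖ ^ 2 < 4 * x i * y i * Real.tan r ^ 2 := by
  obtain ⟨e, d, hd, he, hei, hp⟩ := va_dir i j hij (y - x)
  have hpi : (y - x) i = y i - x i := by simp
  rw [hpi] at hp
  set a := x i with ha
  set b := y i with hb
  set E := EuclideanSpace.single i (1:ℝ) with hE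
  have hDD : ‖y - x‖ ^ 2 = d ^ 2 + (b - a) ^ 2 := by
    rw [← real_inner_self_eq_norm_sq, hp, va_inner i e he hei]; ring
  by_contra! hc
  have hcos : 0 < Real.cos r := Real.cos_pos_of_mem_Ioo ⟨by linarith, hr2⟩
  have htan : 0 < Real.tan r := Real.tan_pos_of_pos_of_lt_pi_div_two hr hr2
  have hab : 0 < a * b := mul_pos hx hy
  set q := √(a * b) with hq
  have hq0 : 0 < q := Real.sqrt_pos.mpr hab
  have hqq : q ^ 2 = a * b := Real.sq_sqrt hab.le
  set D := ‖y - x‖ with hDdef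
  have hDq : 2 * Real.tan r * q ≤ D := by
    apply le_of_sq_le_sq_va _ (norm_nonneg _)
    calc (2 * Real.tan r * q) ^ 2 = 4 * a * b * Real.tan r ^ 2 := by rw [mul_pow, hqq]; ring
      _ ≤ _ := hc
  have hD0 : 0 < D := lt_of_lt_of_le (by positivity) hDq
  obtain ⟨s, hs⟩ := va_plane a b d q D hx hy hd hq0 hqq hD0 hDD
  set z := x + s • e - a • E with hz
  have hzi : z i = 0 := by simp [hz, hE, hei, ha]
  have hle : EuclideanGeometry.angle x z y ≤ visualAngleH i x y := by
    apply le_csSup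
    · refine ⟨Real.pi, ?_⟩
      rintro θ ⟨w, -, rfl⟩
      exact EuclideanGeometry.angle_le_pi _ _ _
    · exact ⟨z, hzi, rfl⟩
  have hlt := lt_of_le_of_lt hle hv
  have hcc := Real.cos_lt_cos_of_nonneg_of_le_pi (EuclideanGeometry.angle_nonneg x z y)
    (by linarith [Real.pi_pos]) hlt
  have hu : x - z = (-s) • e + a • E := by rw [hz, neg_smul]; abel
  have hw : y - z = (d - s) • e + b • E := by
    have : y = x + (d • e + (b - a) • E) := by rw [← hp]; abel
    rw [hz, this, sub_smul, sub_smul]; abel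
  have hin := InnerProductGeometry.cos_angle_mul_norm_mul_norm (x - z) (y - z)
  have hun : ‖x - z‖ ^ 2 = s ^ 2 + a ^ 2 := by
    rw [← real_inner_self_eq_norm_sq, hu, va_inner i e he hei]; ring
  have hwn : ‖y - z‖ ^ 2 = (d - s) ^ 2 + b ^ 2 := by
    rw [← real_inner_self_eq_norm_sq, hw, va_inner i e he hei]; ring
  have hdot : inner ℝ (x - z) (y - z) = s * (s - d) + a * b := by
    rw [hu, hw, va_inner i e he hei]; ring
  rw [hdot] at hin
  have hu0 : 0 < ‖x - z‖ := by
    rcases (norm_nonneg (x - z)).lt_or_eq with h | h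
    · exact h
    · rw [← h] at hun; nlinarith
  have hw0 : 0 < ‖y - z‖ := by
    rcases (norm_nonneg (y - z)).lt_or_eq with h | h
    · exact h
    · rw [← h] at hwn; nlinarith
  change Real.cos r < Real.cos (InnerProductGeometry.angle (x - z) (y - z)) at hcc
  have hN : 0 < ‖x - z‖ * ‖y - z‖ := mul_pos hu0 hw0
  have h1 : Real.cos r * (‖x - z‖ * ‖y - z‖) < s * (s - d) + a * b := by
    rw [← hin]; exact mul_lt_mul_of_pos_right hcc hN
  set dot := s * (s - d) + a * b with hdotd
  set C := a * d - s * (a - b) with hC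
  have hdot0 : 0 < dot := lt_trans (mul_pos hcos hN) h1
  have hNN : (‖x - z‖ * ‖y - z‖) ^ 2 = dot ^ 2 + C ^ 2 := by
    rw [mul_pow, hun, hwn, hdotd, hC]; ring
  have h2 : Real.cos r ^ 2 * (dot ^ 2 + C ^ 2) < dot ^ 2 := by
    rw [← hNN, ← mul_pow]
    exact pow_lt_pow_left₀ h1 (by positivity) (by norm_num)
  have h3 : Real.tan r * dot ≤ C := by
    have : 2 * Real.tan r * q * dot ≤ D * dot := mul_le_mul_of_nonneg_right hDq hdot0.le
    have h4 : (2 * q) * (Real.tan r * dot) ≤ (2 * q) * C := by linarith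
    exact le_of_mul_le_mul_left h4 (by positivity)
  have h5 : (Real.tan r * dot) ^ 2 ≤ C ^ 2 := pow_le_pow_left₀ (by positivity) h3 2
  have h6 : Real.sin r = Real.tan r * Real.cos r := (Real.tan_mul_cos hcos.ne').symm
  have h7 := Real.sin_sq_add_cos_sq r
  rw [h6] at h7
  have h8 : Real.cos r ^ 2 * (Real.tan r * dot) ^ 2 ≤ Real.cos r ^ 2 * C ^ 2 :=
    mul_le_mul_of_nonneg_left h5 (by positivity)
  have h9 : Real.cos r ^ 2 * dot ^ 2 + Real.cos r ^ 2 * (Real.tan r * dot) ^ 2 = dot ^ 2 := by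
    linear_combination dot ^ 2 * h7
  linarith

theorem stmt_16 (n : ℕ) (hn : 2 ≤ n) (x : EuclideanSpace ℝ (Fin n))
    (hx : x ⟨n - 1, by omega⟩ > 0) (r : ℝ) (hr : r ∈ Set.Ioo (0:ℝ) (Real.pi / 2))
    (y : EuclideanSpace ℝ (Fin n)) (hy : y ⟨n - 1, by omega⟩ > 0)
    (hv : visualAngleH ⟨n - 1, by omega⟩ x y < r) :
    dist y (x + (2 * x ⟨n - 1, by omega⟩ * Real.tan r ^ 2) •
        EuclideanSpace.single (⟨n - 1, by omega⟩ : Fin n) (1:ℝ)) <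
      2 * x ⟨n - 1, by omega⟩ * Real.tan r / Real.cos r ∧
    dist y x < 2 * x ⟨n - 1, by omega⟩ * (Real.tan r / Real.cos r + Real.tan r ^ 2) := by
  obtain ⟨hr0, hr2⟩ := hr
  have key := va_key (⟨n - 1, by omega⟩ : Fin n) ⟨0, by omega⟩
    (by intro h; have := congrArg Fin.val h; simp at this; omega) x y hx hy r hr0 hr2 hv
  set i : Fin n := ⟨n - 1, by omega⟩ with hi
  have hcos : 0 < Real.cos r := Real.cos_pos_of_mem_Ioo ⟨by linarith, hr2⟩
  have htan : 0 < Real.tan r := Real.tan_pos_of_pos_of_lt_pi_div_two hr0 hr2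
  have hc2 : (1 / Real.cos r) ^ 2 = 1 + Real.tan r ^ 2 := by
    rw [Real.tan_eq_sin_div_cos]
    field_simp
    linarith [Real.sin_sq_add_cos_sq r]
  set E := EuclideanSpace.single i (1:ℝ) with hE
  set t := Real.tan r with ht
  have hEn : ‖E‖ = 1 := by simp [hE]
  have h1 : dist y (x + (2 * x i * t ^ 2) • E) < 2 * x i * t / Real.cos r := by
    rw [dist_eq_norm]
    apply lt_of_pow_lt_pow_left₀ 2 (by positivity)
    have e1 : y - (x + (2 * x i * t ^ 2) • E) = (y - x) - (2 * x i * t ^ 2) • E := by abel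
    have e2 : inner ℝ (y - x) E = y i - x i := by
      simp [hE, EuclideanSpace.inner_single_right]
    rw [e1, norm_sub_sq_real, inner_smul_right, e2, norm_smul, hEn, mul_one, Real.norm_eq_abs,
      sq_abs]
    have e3 : (2 * x i * t / Real.cos r) ^ 2 = 4 * x i ^ 2 * t ^ 2 * (1 + t ^ 2) := by
      rw [← hc2]; ring
    rw [e3]
    linarith
  refine ⟨h1, ?_⟩
  have h2 := dist_triangle y (x + (2 * x i * t ^ 2) • E) x
  have h3 : dist (x + (2 * x i * t ^ 2) • E) x = 2 * x i * t ^ 2 := by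
    rw [dist_eq_norm, add_sub_cancel_left, norm_smul, hEn, mul_one, Real.norm_eq_abs,
      abs_of_nonneg (by positivity)]
  rw [h3] at h2
  have : 2 * x i * (t / Real.cos r + t ^ 2) = 2 * x i * t / Real.cos r + 2 * x i * t ^ 2 := by ring
  linarith
end

section
/- Let x ∈ H² = {w ∈ ℝ² : w₂ > 0} and r ∈ (0,π/2). Define y₁ = (x₁, x₂·(1−sin r)/(1+sin r)) and y₂ = (x₁, x₂·(1+sin r)/(1−sin r)). Then v(x,y₁) = v(x,y₂) = r, where v(x,y) = sup{∠(x,z,y) : z ∈ ℝ², z₂ = 0}, and both points lie on the boundary of the Euclidean ball B²(x + 2x₂ tan²(r) e₂, 2x₂ tan(r)/cos(r)): |yⱼ − x − 2x₂ tan²(r) e₂| = 2x₂ tan(r)/cos(r) for j = 1, 2. Hence the Euclidean ball B²(x + 2x₂ tan²(r) e₂, 2x₂ tan(r)/cos(r)) containing B_v(x,r) is smallest possible. -/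
lemma va_aux (x y : EuclideanSpace ℝ (Fin 2)) (r : ℝ) (hr : r ∈ Set.Ioo (0:ℝ) (Real.pi / 2))
    (hx : 0 < x 1) (hy : 0 < y 1) (h0 : y 0 = x 0)
    (hc : Real.cos r ^ 2 * (x 1 + y 1) ^ 2 = 4 * (x 1 * y 1)) :
    visualAngleH (1 : Fin 2) x y = r := by
  have hcos : 0 < Real.cos r := Real.cos_pos_of_mem_Ioo ⟨by linarith [hr.1, Real.pi_pos], hr.2⟩
  have key : ∀ z : EuclideanSpace ℝ (Fin 2), z 1 = 0 → EuclideanGeometry.angle x z y =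
      Real.arccos (((x 0 - z 0) ^ 2 + x 1 * y 1) /
        (√((x 0 - z 0) ^ 2 + x 1 ^ 2) * √((x 0 - z 0) ^ 2 + y 1 ^ 2))) := by
    intro z hz
    unfold EuclideanGeometry.angle InnerProductGeometry.angle
    congr 1
    simp [EuclideanSpace.norm_eq, PiLp.inner_apply, Fin.sum_univ_two, hz, h0]
    ring
  have harc : Real.arccos (Real.cos r) = r :=
    Real.arccos_cos hr.1.le (by linarith [hr.2, Real.pi_pos])
  apply IsGreatest.csSup_eq
  constructor
  · refine ⟨!₂[x 0 - √(x 1 * y 1), 0], by simp, ?_⟩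
    rw [key _ (by simp)]
    have hpq : 0 < x 1 * y 1 := mul_pos hx hy
    conv_lhs => rw [← harc]
    congr 1
    have e : (x 0 - (!₂[x 0 - √(x 1 * y 1), 0] : EuclideanSpace ℝ (Fin 2)) 0) ^ 2 = x 1 * y 1 := by
      simp [Real.sq_sqrt hpq.le]
    rw [e, ← Real.sqrt_mul (by positivity)]
    have e2 : (x 1 * y 1 + x 1 ^ 2) * (x 1 * y 1 + y 1 ^ 2) = (x 1 * y 1) * (x 1 + y 1) ^ 2 := by
      ring
    rw [e2, Real.sqrt_mul hpq.le, Real.sqrt_sq (by positivity)]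
    have hs : √(x 1 * y 1) = Real.cos r * (x 1 + y 1) / 2 := by
      rw [Real.sqrt_eq_iff_mul_self_eq hpq.le (by positivity)]
      nlinarith
    rw [eq_div_iff (by positivity), hs]
    linear_combination hc / 2
  · rintro θ ⟨z, hz, rfl⟩
    rw [key z hz]
    conv_rhs => rw [← harc]
    apply Real.arccos_le_arccos
    have hpq : 0 < x 1 * y 1 := mul_pos hx hy
    rw [← Real.sqrt_mul (by positivity), le_div_iff₀ (by positivity)]
    generalize x 0 - z 0 = t
    apply le_of_sq_le_sq _ (by positivity)
    rw [mul_pow, Real.sq_sqrt (by positivity)]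
    have hS : 0 < (x 1 + y 1) ^ 2 := by positivity
    refine le_of_mul_le_mul_right ?_ hS
    have e : Real.cos r ^ 2 * ((t ^ 2 + x 1 ^ 2) * (t ^ 2 + y 1 ^ 2)) * (x 1 + y 1) ^ 2
      = 4 * (x 1 * y 1) * ((t ^ 2 + x 1 ^ 2) * (t ^ 2 + y 1 ^ 2)) := by rw [← hc]; ring
    rw [e]
    have := sq_nonneg ((x 1 - y 1) * (t ^ 2 - x 1 * y 1))
    linarith

theorem stmt_17 (x : EuclideanSpace ℝ (Fin 2)) (hx : x 1 > 0)
    (r : ℝ) (hr : r ∈ Set.Ioo (0:ℝ) (Real.pi / 2))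
    (y₁ y₂ : EuclideanSpace ℝ (Fin 2))
    (hy₁0 : y₁ 0 = x 0) (hy₁1 : y₁ 1 = x 1 * (1 - Real.sin r) / (1 + Real.sin r))
    (hy₂0 : y₂ 0 = x 0) (hy₂1 : y₂ 1 = x 1 * (1 + Real.sin r) / (1 - Real.sin r)) :
    visualAngleH (1 : Fin 2) x y₁ = r ∧ visualAngleH (1 : Fin 2) x y₂ = r ∧
    dist y₁ (x + (2 * x 1 * Real.tan r ^ 2) • EuclideanSpace.single (1 : Fin 2) (1:ℝ)) =
      2 * x 1 * Real.tan r / Real.cos r ∧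
    dist y₂ (x + (2 * x 1 * Real.tan r ^ 2) • EuclideanSpace.single (1 : Fin 2) (1:ℝ)) =
      2 * x 1 * Real.tan r / Real.cos r := by
  have hcos : 0 < Real.cos r := Real.cos_pos_of_mem_Ioo ⟨by linarith [hr.1, Real.pi_pos], hr.2⟩
  have hsin : 0 < Real.sin r := Real.sin_pos_of_pos_of_lt_pi hr.1 (by linarith [hr.2, Real.pi_pos])
  have hsc := Real.sin_sq_add_cos_sq r
  have hs1 : 0 < 1 - Real.sin r := by nlinarith
  have hs2 : 0 < 1 + Real.sin r := by linarith
  have hc2 : Real.cos r ^ 2 = (1 - Real.sin r) * (1 + Real.sin r) := by linarith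
  have hR : 2 * x 1 * Real.tan r / Real.cos r =
      2 * x 1 * Real.sin r / ((1 - Real.sin r) * (1 + Real.sin r)) := by
    rw [← hc2, Real.tan_eq_sin_div_cos]; field_simp
  have hT : 2 * x 1 * Real.tan r ^ 2 =
      2 * x 1 * Real.sin r ^ 2 / ((1 - Real.sin r) * (1 + Real.sin r)) := by
    rw [← hc2, Real.tan_eq_sin_div_cos]; field_simp
  have hRp : 0 < 2 * x 1 * Real.tan r / Real.cos r := by rw [hR]; positivity
  refine ⟨va_aux _ _ _ hr hx (by rw [hy₁1]; positivity) hy₁0 ?_,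
    va_aux _ _ _ hr hx (by rw [hy₂1]; positivity) hy₂0 ?_, ?_, ?_⟩
  · rw [hy₁1, hc2]; field_simp; ring
  · rw [hy₂1, hc2]; field_simp; ring
  · rw [EuclideanSpace.dist_eq, ← Real.sqrt_sq hRp.le]
    congr 1
    simp only [Fin.sum_univ_two, Real.dist_eq, sq_abs]
    rw [hR, hT]
    simp [hy₁0, hy₁1]
    field_simp
    ring
  · rw [EuclideanSpace.dist_eq, ← Real.sqrt_sq hRp.le]
    congr 1
    simp only [Fin.sum_univ_two, Real.dist_eq, sq_abs]
    rw [hR, hT]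
    simp [hy₂0, hy₂1]
    field_simp
    ring
end

section
/- Let n ≥ 2, x ∈ Hⁿ = {w ∈ ℝⁿ : wₙ > 0} and r ∈ (0,π/2). If y ∈ ℝⁿ satisfies |y − x − (sec²(r) − 1)xₙ·eₙ| < xₙ tan(r), then y ∈ Hⁿ and v(x,y) = sup{∠(x,z,y) : z ∈ ℝⁿ, zₙ = 0} < r. That is, Bⁿ(x + (sec²(r) − 1)xₙ eₙ, xₙ tan(r)) ⊂ B_v(x,r). -/
lemma cone_aux {E : Type*} [NormedAddCommGroup E] [InnerProductSpace ℝ E] (a e w : E)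
    (h t : ℝ) (he : ‖e‖ = 1) (hae : inner ℝ a e = h) (hh : 0 < h) (ht : 0 < t)
    (hw : ‖w‖ ≤ h * t) :
    0 ≤ inner ℝ a (a + (t ^ 2 * h) • e + w) ∧
    ‖a‖ ^ 2 * ‖a + (t ^ 2 * h) • e + w‖ ^ 2 ≤
      (1 + t ^ 2) * (inner ℝ a (a + (t ^ 2 * h) • e + w)) ^ 2 := by
  have hρ : 0 < ‖a‖ := by
    rw [norm_pos_iff]
    rintro rfl
    simp at hae
    linarith
  -- the rejection map
  have key : ∀ v : E, ‖(‖a‖ ^ 2) • v - (inner ℝ a v) • a‖ ^ 2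
      = ‖a‖ ^ 2 * (‖a‖ ^ 2 * ‖v‖ ^ 2 - (inner ℝ a v) ^ 2) := by
    intro v
    rw [norm_sub_sq_real, norm_smul, norm_smul, inner_smul_left, inner_smul_right,
      real_inner_comm a v, mul_pow, mul_pow]
    simp only [Real.norm_eq_abs, sq_abs, conj_trivial]
    ring
  set ρ := ‖a‖ with hρd
  have hP : ∃ P, inner ℝ a w = P := ⟨_, rfl⟩
  obtain ⟨P, hP⟩ := hP
  have hD : inner ℝ a (a + (t ^ 2 * h) • e + w) = ρ ^ 2 + t ^ 2 * h ^ 2 + P := by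
    rw [inner_add_right, inner_add_right, inner_smul_right, real_inner_self_eq_norm_sq, hae, hP]
    ring
  have kb := key (a + (t ^ 2 * h) • e + w)
  have ke := key e
  have kw := key w
  have tri : ‖(ρ ^ 2) • (a + (t ^ 2 * h) • e + w) - (inner ℝ a (a + (t ^ 2 * h) • e + w)) • a‖
      ≤ t ^ 2 * h * ‖(ρ ^ 2) • e - (inner ℝ a e) • a‖ + ‖(ρ ^ 2) • w - (inner ℝ a w) • a‖ := by
    have : (ρ ^ 2) • (a + (t ^ 2 * h) • e + w) - (inner ℝ a (a + (t ^ 2 * h) • e + w)) • a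
        = (t ^ 2 * h) • ((ρ ^ 2) • e - (inner ℝ a e) • a) + ((ρ ^ 2) • w - (inner ℝ a w) • a) := by
      rw [hD, hae, hP]
      module
    rw [this]
    refine (norm_add_le _ _).trans ?_
    rw [norm_smul, Real.norm_of_nonneg (by positivity)]
  have n1 := norm_nonneg ((ρ ^ 2) • (a + (t ^ 2 * h) • e + w) -
    (inner ℝ a (a + (t ^ 2 * h) • e + w)) • a)
  have n2 := norm_nonneg ((ρ ^ 2) • e - (inner ℝ a e) • a)
  have n3 := norm_nonneg ((ρ ^ 2) • w - (inner ℝ a w) • a)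
  generalize ‖(ρ ^ 2) • (a + (t ^ 2 * h) • e + w) -
    (inner ℝ a (a + (t ^ 2 * h) • e + w)) • a‖ = Nb at *
  generalize ‖(ρ ^ 2) • e - (inner ℝ a e) • a‖ = Ne at *
  generalize ‖(ρ ^ 2) • w - (inner ℝ a w) • a‖ = Nw at *
  generalize ‖a + (t ^ 2 * h) • e + w‖ = B at *
  rw [hD] at kb ⊢
  rw [hae, he] at ke
  rw [hP] at kw
  have hw0 := norm_nonneg w
  generalize ‖w‖ = m at *
  clear_value ρ
  clear key hD hP hae he hρd
  obtain ⟨s, rfl⟩ : ∃ s, Ne = ρ * s := ⟨Ne / ρ, by field_simp⟩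
  obtain ⟨W, rfl⟩ : ∃ W, Nw = ρ * W := ⟨Nw / ρ, by field_simp⟩
  obtain ⟨V, rfl⟩ : ∃ V, Nb = ρ * V := ⟨Nb / ρ, by field_simp⟩
  have ρ2 : ρ ^ 2 ≠ 0 := by positivity
  have ke' : s ^ 2 = ρ ^ 2 - h ^ 2 := by
    apply mul_left_cancel₀ ρ2; linarith
  have kw' : W ^ 2 = ρ ^ 2 * m ^ 2 - P ^ 2 := by
    apply mul_left_cancel₀ ρ2; linarith
  have kb' : V ^ 2 = ρ ^ 2 * B ^ 2 - (ρ ^ 2 + t ^ 2 * h ^ 2 + P) ^ 2 := by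
    apply mul_left_cancel₀ ρ2; linarith
  have hV : 0 ≤ V := nonneg_of_mul_nonneg_right n1 hρ
  have tri' : V ≤ t ^ 2 * h * s + W := by
    apply le_of_mul_le_mul_left _ hρ; linarith
  have hm : m ^ 2 ≤ (h * t) ^ 2 := by gcongr
  have hPW : P ^ 2 + W ^ 2 ≤ ρ ^ 2 * (h * t) ^ 2 := by
    have := mul_le_mul_of_nonneg_left hm (sq_nonneg ρ)
    linarith
  have c1 : W - t * P ≤ t * (h ^ 2 * (1 + t ^ 2) + ρ ^ 2) / 2 := by
    apply le_of_sq_le_sq _ (by positivity)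
    have q1 : (W - t * P) ^ 2 ≤ (1 + t ^ 2) * (P ^ 2 + W ^ 2) := by
      nlinarith [sq_nonneg (t * W + P)]
    have q2 : (1 + t ^ 2) * (P ^ 2 + W ^ 2) ≤ (1 + t ^ 2) * (ρ ^ 2 * (h * t) ^ 2) := by gcongr
    nlinarith [mul_nonneg (sq_nonneg t) (sq_nonneg (h ^ 2 * (1 + t ^ 2) - ρ ^ 2))]
  have c2 : V ≤ t * (ρ ^ 2 + t ^ 2 * h ^ 2 + P) := by
    have : 0 ≤ t * (s - h * t) ^ 2 := by positivity
    have e1 : t * s ^ 2 = t * (ρ ^ 2 - h ^ 2) := by rw [ke']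
    nlinarith
  constructor
  · exact nonneg_of_mul_nonneg_right (hV.trans c2) ht
  · have : V ^ 2 ≤ (t * (ρ ^ 2 + t ^ 2 * h ^ 2 + P)) ^ 2 := by gcongr
    nlinarith

lemma angle_aux {n : ℕ} (i : Fin n) (x y z : EuclideanSpace ℝ (Fin n)) (hx : 0 < x i)
    (hz : z i = 0) (r : ℝ) (h0 : 0 < r) (h1 : r < Real.pi / 2)
    (hy : dist y (x + (((1 / Real.cos r) ^ 2 - 1) * x i) •
        EuclideanSpace.single i (1:ℝ)) < x i * Real.tan r) :
    EuclideanGeometry.angle x z y ≤ r := by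
  have hc : 0 < Real.cos r := Real.cos_pos_of_mem_Ioo ⟨by linarith, h1⟩
  have ht : 0 < Real.tan r := Real.tan_pos_of_pos_of_lt_pi_div_two h0 h1
  have hsec : 1 + Real.tan r ^ 2 = (1 / Real.cos r) ^ 2 := by
    rw [Real.tan_eq_sin_div_cos]
    field_simp
    linarith [Real.sin_sq_add_cos_sq r]
  have hsec' : (1 / Real.cos r) ^ 2 - 1 = Real.tan r ^ 2 := by linarith
  rw [hsec', dist_eq_norm] at hy
  have := cone_aux (x - z) (EuclideanSpace.single i (1:ℝ))
    (y - (x + (Real.tan r ^ 2 * x i) • EuclideanSpace.single i (1:ℝ))) (x i) (Real.tan r)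
    (by simp) (by simp [EuclideanSpace.inner_single_right, hz]) hx ht hy.le
  have hb : x - z + (Real.tan r ^ 2 * x i) • EuclideanSpace.single i (1:ℝ) +
    (y - (x + (Real.tan r ^ 2 * x i) • EuclideanSpace.single i (1:ℝ))) = y - z := by abel
  rw [hb, hsec] at this
  obtain ⟨p1, p2⟩ := this
  have hle : Real.cos r * (‖x - z‖ * ‖y - z‖) ≤ inner ℝ (x - z) (y - z) := by
    apply le_of_sq_le_sq _ p1
    have := mul_le_mul_of_nonneg_left p2 (sq_nonneg (Real.cos r))
    calc _ = Real.cos r ^ 2 * (‖x - z‖ ^ 2 * ‖y - z‖ ^ 2) := by ring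
      _ ≤ _ := this
      _ = _ := by field_simp
  have hxz : 0 < ‖x - z‖ := by
    rw [norm_pos_iff, sub_ne_zero]
    rintro rfl
    linarith
  have hyi : 0 < y i := by
    have h2 := (PiLp.norm_apply_le (y - (x + (Real.tan r ^ 2 * x i) •
      EuclideanSpace.single i (1:ℝ))) i).trans_lt hy
    simp at h2
    have h3 := (abs_lt.1 h2).1
    nlinarith [mul_pos hx (show 0 < 1 - Real.tan r + Real.tan r ^ 2 by
      nlinarith [sq_nonneg (Real.tan r - 1)])]
  have hyz : 0 < ‖y - z‖ := by
    rw [norm_pos_iff, sub_ne_zero]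
    rintro rfl
    linarith
  rw [EuclideanGeometry.angle, InnerProductGeometry.angle, vsub_eq_sub, vsub_eq_sub]
  calc _ ≤ Real.arccos (Real.cos r) := by
        apply Real.arccos_le_arccos
        rw [le_div_iff₀ (by positivity)]
        exact hle
    _ = r := Real.arccos_cos h0.le (by linarith)

theorem stmt_18 (n : ℕ) (hn : 2 ≤ n) (x : EuclideanSpace ℝ (Fin n))
    (hx : x ⟨n - 1, by omega⟩ > 0) (r : ℝ) (hr : r ∈ Set.Ioo (0:ℝ) (Real.pi / 2))
    (y : EuclideanSpace ℝ (Fin n))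
    (hy : dist y (x + (((1 / Real.cos r) ^ 2 - 1) * x ⟨n - 1, by omega⟩) •
        EuclideanSpace.single (⟨n - 1, by omega⟩ : Fin n) (1:ℝ)) <
      x ⟨n - 1, by omega⟩ * Real.tan r) :
    y ⟨n - 1, by omega⟩ > 0 ∧ visualAngleH ⟨n - 1, by omega⟩ x y < r := by
  generalize (⟨n - 1, by omega⟩ : Fin n) = i at *
  obtain ⟨h0, h1⟩ := hr
  have hc : 0 < Real.cos r := Real.cos_pos_of_mem_Ioo ⟨by linarith, h1⟩
  constructor
  · have hsec : (1 / Real.cos r) ^ 2 - 1 = Real.tan r ^ 2 := by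
      rw [Real.tan_eq_sin_div_cos]
      field_simp
      linarith [Real.sin_sq_add_cos_sq r]
    rw [hsec, dist_eq_norm] at hy
    have h2 := (PiLp.norm_apply_le (y - (x + (Real.tan r ^ 2 * x i) •
      EuclideanSpace.single i (1:ℝ))) i).trans_lt hy
    simp at h2
    have h3 := (abs_lt.1 h2).1
    nlinarith [mul_pos hx (show 0 < 1 - Real.tan r + Real.tan r ^ 2 by
      nlinarith [sq_nonneg (Real.tan r - 1)])]
  · have c1 : ContinuousAt (fun r => dist y (x + (((1 / Real.cos r) ^ 2 - 1) * x i) •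
        EuclideanSpace.single i (1:ℝ))) r := by
      have : ContinuousAt (fun r => 1 / Real.cos r) r :=
        continuousAt_const.div Real.continuous_cos.continuousAt hc.ne'
      fun_prop
    have c2 : ContinuousAt (fun r => x i * Real.tan r) r :=
      continuousAt_const.mul (Real.continuousAt_tan.2 hc.ne')
    have ev := (c1.eventually_lt c2 hy).and (lt_mem_nhds h0)
    have ev2 := (ev.filter_mono (nhdsWithin_le_nhds (s := Set.Iio r))).and self_mem_nhdsWithin
    obtain ⟨r', ⟨h4, h5⟩, h6⟩ := ev2.exists
    have h6 : r' < r := h6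
    refine lt_of_le_of_lt ?_ h6
    apply Real.sSup_le _ h5.le
    rintro θ ⟨z, hz, rfl⟩
    exact angle_aux i x y z hx hz r' h5 (h6.trans h1) h4
end

section
/- Let n ≥ 2, x ∈ Hⁿ = {w ∈ ℝⁿ : wₙ > 0} and r ∈ (0,π/2). If y ∈ ℝⁿ satisfies |y − x| < xₙ sin(r), then y ∈ Hⁿ and v(x,y) = sup{∠(x,z,y) : z ∈ ℝⁿ, zₙ = 0} < r. That is, Bⁿ(x, xₙ sin r) ⊂ B_v(x,r). -/
theorem vis_aux {E : Type*} [NormedAddCommGroup E] [InnerProductSpace ℝ E] (u w : E) (s : ℝ)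
    (hu : 0 < ‖u‖) (hs0 : 0 ≤ s) (hs1 : s < 1) (h : ‖u - w‖ ≤ s * ‖u‖) :
    InnerProductGeometry.angle u w ≤ Real.arcsin s := by
  have hw : 0 < ‖w‖ := by
    have h1 : ‖u‖ ≤ ‖u - w‖ + ‖w‖ := by simpa using norm_add_le (u - w) w
    nlinarith
  have e := norm_sub_sq_real u w
  have h2 : ‖u - w‖ ^ 2 ≤ (s * ‖u‖) ^ 2 := by gcongr
  have hc : Real.cos (Real.arcsin s) ^ 2 = 1 - s ^ 2 := by
    rw [Real.cos_arcsin, Real.sq_sqrt]; nlinarith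
  set c := Real.cos (Real.arcsin s) with hcdef
  have h3 : c ≤ inner ℝ u w / (‖u‖ * ‖w‖) := by
    rw [le_div_iff₀ (by positivity)]
    have h5 : c ^ 2 * ‖u‖ ^ 2 = (1 - s ^ 2) * ‖u‖ ^ 2 := by rw [hc]
    nlinarith [sq_nonneg (c * ‖u‖ - ‖w‖)]
  have h4 : Real.arccos c = Real.arcsin s :=
    Real.arccos_cos (Real.arcsin_nonneg.2 hs0)
      ((Real.arcsin_le_pi_div_two s).trans (by linarith [Real.pi_pos]))
  rw [← h4]
  exact Real.arccos_le_arccos h3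

theorem stmt_19 (n : ℕ) (hn : 2 ≤ n) (x : EuclideanSpace ℝ (Fin n))
    (hx : x ⟨n - 1, by omega⟩ > 0) (r : ℝ) (hr : r ∈ Set.Ioo (0:ℝ) (Real.pi / 2))
    (y : EuclideanSpace ℝ (Fin n))
    (hy : dist y x < x ⟨n - 1, by omega⟩ * Real.sin r) :
    y ⟨n - 1, by omega⟩ > 0 ∧ visualAngleH ⟨n - 1, by omega⟩ x y < r := by
  obtain ⟨hr0, hr1⟩ := hr
  generalize (⟨n - 1, by omega⟩ : Fin n) = i at *
  have hcoord : ∀ a : EuclideanSpace ℝ (Fin n), |a i| ≤ ‖a‖ := fun a => by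
    simpa using PiLp.norm_apply_le a i
  have hd : dist y x = ‖x - y‖ := by rw [dist_comm, dist_eq_norm]
  rw [hd] at hy
  have hsin := Real.sin_le_one r
  constructor
  · have h1 := (le_abs_self _).trans (hcoord (x - y))
    simp only [PiLp.sub_apply] at h1
    nlinarith
  · have hs : ‖x - y‖ / x i < Real.sin r := by
      rw [div_lt_iff₀ hx]; linarith
    have hs0 : 0 ≤ ‖x - y‖ / x i := by positivity
    have harc : Real.arcsin (‖x - y‖ / x i) < r := by
      rw [Real.arcsin_lt_iff_lt_sin ⟨by linarith, by linarith⟩ ⟨by linarith, by linarith⟩]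
      exact hs
    refine lt_of_le_of_lt (csSup_le ⟨_, 0, by simp, rfl⟩ ?_) harc
    rintro θ ⟨z, hz, rfl⟩
    have hxz : x i ≤ ‖x - z‖ := by
      have h1 := (le_abs_self _).trans (hcoord (x - z))
      simpa [hz] using h1
    unfold EuclideanGeometry.angle
    refine vis_aux _ _ _ (by simpa using hx.trans_le hxz) hs0 (by linarith) ?_
    simp only [vsub_eq_sub, sub_sub_sub_cancel_right]
    calc ‖x - y‖ = ‖x - y‖ / x i * x i := by field_simp
      _ ≤ _ := by gcongr
end
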